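/- arXiv:2202.12878 — 2 statements merged into one kernel-verified Lean document; each statement's English description precedes it below -/
import Mathlib

section
/- Let F be a presheaf on 𝒱I, V a finite-dimensional 𝔽_p-vector space and x ∈ F(V) such that (V,x) is central for F. Then for every injective linear map α : T → V, the pair (T, α^*x) is central for F. -/
set_option maxHeartbeats 1000000

namespace Paper

/-- A finite-dimensional vector space over `𝔽_p = ZMod p`: an object of the
categories `𝒱^f` and `𝒱I`. -/
structure FDVec (p : ℕ) [Fact p.Prime] : Type 1 where
  carrier : Type
  [addCommGroup' : AddCommGroup carrier]
  [module' : Module (ZMod p) carrier]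
  [finiteDimensional' : FiniteDimensional (ZMod p) carrier]

attribute [instance] FDVec.addCommGroup' FDVec.module' FDVec.finiteDimensional'

instance (p : ℕ) [Fact p.Prime] : CoeSort (FDVec p) Type := ⟨FDVec.carrier⟩

abbrev FDVec.of (p : ℕ) [Fact p.Prime] (X : Type) [AddCommGroup X] [Module (ZMod p) X]
    [FiniteDimensional (ZMod p) X] : FDVec p := ⟨X⟩

variable {p : ℕ} [Fact p.Prime]

/-- The object of `𝒱I` determined by a subspace. -/
abbrev subFD {W : FDVec p} (U : Submodule (ZMod p) W) : FDVec p := FDVec.of p U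

theorem comp_injective {A B C : Type} [AddCommGroup A] [Module (ZMod p) A]
    [AddCommGroup B] [Module (ZMod p) B] [AddCommGroup C] [Module (ZMod p) C]
    (f : A →ₗ[ZMod p] B) (g : B →ₗ[ZMod p] C)
    (hf : Function.Injective f) (hg : Function.Injective g) :
    Function.Injective (g ∘ₗ f) := fun _ _ h => hf (hg h)

theorem linearMap_id_injective (V : Type) [AddCommGroup V] [Module (ZMod p) V] :
    Function.Injective (LinearMap.id : V →ₗ[ZMod p] V) := fun _ _ h => h

theorem equiv_toLinearMap_injective {A B : Type} [AddCommGroup A] [Module (ZMod p) A]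
    [AddCommGroup B] [Module (ZMod p) B] (e : A ≃ₗ[ZMod p] B) :
    Function.Injective (e.toLinearMap : A →ₗ[ZMod p] B) := e.injective

/-- A presheaf on the category `𝒱I` of finite-dimensional `𝔽_p`-vector spaces
and injective linear maps: a contravariant functor to `Set`. -/
structure VIPresheaf (p : ℕ) [Fact p.Prime] where
  obj : FDVec p → Type
  map : ∀ {V W : FDVec p} (f : V →ₗ[ZMod p] W), Function.Injective f → obj W → obj V
  map_id : ∀ (V : FDVec p) (h : Function.Injective (LinearMap.id : V →ₗ[ZMod p] V))
      (x : obj V), map LinearMap.id h x = x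
  map_comp : ∀ {V W X : FDVec p} (f : V →ₗ[ZMod p] W) (hf : Function.Injective f)
      (g : W →ₗ[ZMod p] X) (hg : Function.Injective g)
      (hgf : Function.Injective (g ∘ₗ f)) (x : obj X),
      map (g ∘ₗ f) hgf x = map f hf (map g hg x)

/-- A groupoid whose objects are the pairs `(U, i)` with `U` a subspace of `W i`,
and whose morphisms are linear isomorphisms between such subspaces. -/
structure SubGroupoid {ι : Type} (W : ι → FDVec p) where
  mor : ∀ (i j : ι) (U : Submodule (ZMod p) (W i)) (U' : Submodule (ZMod p) (W j)),
    Set (↥U ≃ₗ[ZMod p] ↥U')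
  id_mem : ∀ i U, LinearEquiv.refl (ZMod p) ↥U ∈ mor i i U U
  comp_mem : ∀ (i j k : ι) (U : Submodule (ZMod p) (W i)) (U' : Submodule (ZMod p) (W j))
      (U'' : Submodule (ZMod p) (W k)) (α : ↥U ≃ₗ[ZMod p] ↥U')
      (β : ↥U' ≃ₗ[ZMod p] ↥U''),
      α ∈ mor i j U U' → β ∈ mor j k U' U'' → (α.trans β) ∈ mor i k U U''
  inv_mem : ∀ (i j : ι) (U : Submodule (ZMod p) (W i)) (U' : Submodule (ZMod p) (W j))
      (α : ↥U ≃ₗ[ZMod p] ↥U'),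
      α ∈ mor i j U U' → α.symm ∈ mor j i U' U

section Restriction

variable {Wi Wj : FDVec p} {U : Submodule (ZMod p) Wi} {U' : Submodule (ZMod p) Wj}

/-- The restriction of `α : U ≃ U'` to a subspace `M ≤ U`, as a map to the ambient space. -/
def restrictMap (α : ↥U ≃ₗ[ZMod p] ↥U') {M : Submodule (ZMod p) Wi}
    (hMU : M ≤ U) : ↥M →ₗ[ZMod p] Wj :=
  U'.subtype ∘ₗ (α.toLinearMap) ∘ₗ (Submodule.inclusion hMU)

theorem restrictMap_injective (α : ↥U ≃ₗ[ZMod p] ↥U')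
    {M : Submodule (ZMod p) Wi} (hMU : M ≤ U) :
    Function.Injective (restrictMap α hMU) := by
  intro a b hab
  have h1 : α (Submodule.inclusion hMU a) = α (Submodule.inclusion hMU b) := Subtype.ext hab
  have h2 := α.injective h1
  have h3 := congrArg Subtype.val h2
  exact Subtype.ext h3

/-- The image `α(M)` of a subspace `M ≤ U` under `α : U ≃ U'`. -/
def restrictImg (α : ↥U ≃ₗ[ZMod p] ↥U') {M : Submodule (ZMod p) Wi}
    (hMU : M ≤ U) : Submodule (ZMod p) Wj :=
  LinearMap.range (restrictMap α hMU)

/-- The restriction-corestriction `α_M : M ≃ α(M)` of `α : U ≃ U'` to `M ≤ U`. -/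
noncomputable def restrictEquiv (α : ↥U ≃ₗ[ZMod p] ↥U')
    {M : Submodule (ZMod p) Wi} (hMU : M ≤ U) :
    ↥M ≃ₗ[ZMod p] ↥(restrictImg α hMU) :=
  LinearEquiv.ofInjective _ (restrictMap_injective α hMU)

end Restriction

/-- The restriction property of a groupoid on subspaces. -/
def SubGroupoid.HasRestriction {ι : Type} {W : ι → FDVec p} (G : SubGroupoid W) : Prop :=
  ∀ (i j : ι) (U : Submodule (ZMod p) (W i)) (U' : Submodule (ZMod p) (W j))
    (α : ↥U ≃ₗ[ZMod p] ↥U'), α ∈ G.mor i j U U' →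
    ∀ (M : Submodule (ZMod p) (W i)) (hMU : M ≤ U),
      restrictEquiv α hMU ∈ G.mor i j M (restrictImg α hMU)

/-- An element of `⊔_{i} Hom_{𝒱I}(V, W i)`. -/
def InjHom (V : FDVec p) {ι : Type} (W : ι → FDVec p) : Type :=
  Σ i : ι, {f : V →ₗ[ZMod p] W i // Function.Injective f}

/-- The relation `∼_𝒢` on `⊔_i Hom_{𝒱I}(V, W i)`. -/
def SubGroupoid.Rel {ι : Type} {W : ι → FDVec p} (G : SubGroupoid W) (V : FDVec p)
    (x y : InjHom V W) : Prop :=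
  ∃ α ∈ G.mor x.1 y.1 (LinearMap.range x.2.1) (LinearMap.range y.2.1),
    ∀ v : V, ((α (x.2.1.rangeRestrict v) : ↥(LinearMap.range y.2.1)) : W y.1) = y.2.1 v

/-- A generating family of a presheaf `F` on `𝒱I`: a natural surjection
`q : ⊔_i Hom_{𝒱I}(−, W i) → F`. -/
structure GenFamily {ι : Type} (W : ι → FDVec p) (F : VIPresheaf p) where
  q : ∀ (V : FDVec p) (i : ι) (f : V →ₗ[ZMod p] W i), Function.Injective f → F.obj V
  natural : ∀ (T V : FDVec p) (β : T →ₗ[ZMod p] V) (hβ : Function.Injective β)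
      (i : ι) (f : V →ₗ[ZMod p] W i) (hf : Function.Injective f)
      (hfβ : Function.Injective (f ∘ₗ β)),
      q T i (f ∘ₗ β) hfβ = F.map β hβ (q V i f hf)
  surjective : ∀ (V : FDVec p) (x : F.obj V), ∃ i f hf, q V i f hf = x

/-- `φ_i = q(id_{W i})`. -/
def GenFamily.phi {ι : Type} {W : ι → FDVec p} {F : VIPresheaf p} (Q : GenFamily W F)
    (i : ι) : F.obj (W i) :=
  Q.q (W i) i LinearMap.id (linearMap_id_injective _)

/-- The morphisms of the groupoid `𝒢_{(F,q)}`: isomorphisms `α : U ≃ U'` with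
`α^* ι_{U'}^* φ_j = ι_U^* φ_i`. -/
def GenFamily.mor {ι : Type} {W : ι → FDVec p} {F : VIPresheaf p} (Q : GenFamily W F)
    (i j : ι) (U : Submodule (ZMod p) (W i)) (U' : Submodule (ZMod p) (W j)) :
    Set (↥U ≃ₗ[ZMod p] ↥U') :=
  {α | F.map (V := subFD U) (W := subFD U') α.toLinearMap (equiv_toLinearMap_injective α)
        (F.map (V := subFD U') (W := W j) U'.subtype U'.injective_subtype (Q.phi j))
      = F.map (V := subFD U) (W := W i) U.subtype U.injective_subtype (Q.phi i)}

/-- The relation `∼_{𝒢_{(F,q)}}`. -/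
def GenFamily.GRel {ι : Type} {W : ι → FDVec p} {F : VIPresheaf p} (Q : GenFamily W F)
    (V : FDVec p) (x y : InjHom V W) : Prop :=
  ∃ α ∈ Q.mor x.1 y.1 (LinearMap.range x.2.1) (LinearMap.range y.2.1),
    ∀ v : V, ((α (x.2.1.rangeRestrict v) : ↥(LinearMap.range y.2.1)) : W y.1) = y.2.1 v

/-- `x ∈ F_i(V)`, where `F_i ⊆ F` is the image of `Hom_{𝒱I}(−, W i)` under `q`. -/
def GenFamily.memComponent {ι : Type} {W : ι → FDVec p} {F : VIPresheaf p}
    (Q : GenFamily W F) (i : ι) (V : FDVec p) (x : F.obj V) : Prop :=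
  ∃ f hf, Q.q V i f hf = x

/-- Minimality of a generating family: `F_i ⊄ F_j` for `i ≠ j`. -/
def GenFamily.Minimal {ι : Type} {W : ι → FDVec p} {F : VIPresheaf p}
    (Q : GenFamily W F) : Prop :=
  ∀ i j : ι, i ≠ j →
    ¬ (∀ (V : FDVec p) (x : F.obj V), Q.memComponent i V x → Q.memComponent j V x)

/-- A class in `𝐁(V, W)`, represented canonically by its "glue" subspace
`G = {(ν m, −ω m) : m ∈ M} ⊆ V × W`.  The two conditions express the injectivity
of `ν` and of `ω` respectively. -/
structure Corr (p : ℕ) [Fact p.Prime] (V W : FDVec p) where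
  carrier : Submodule (ZMod p) (↥V × ↥W)
  inj_left : ∀ m ∈ carrier, Prod.fst m = 0 → m = 0
  inj_right : ∀ m ∈ carrier, Prod.snd m = 0 → m = 0

/-- The pushout `V ⊕_{ν,ω} W` of a class of `𝐁(V,W)`. -/
abbrev Corr.po {V W : FDVec p} (c : Corr p V W) : FDVec p :=
  FDVec.of p ((↥V × ↥W) ⧸ c.carrier)

/-- The canonical injection `ι_V : V → V ⊕_{ν,ω} W`. -/
def Corr.inl {V W : FDVec p} (c : Corr p V W) : V →ₗ[ZMod p] c.po :=
  c.carrier.mkQ ∘ₗ LinearMap.inl (ZMod p) ↥V ↥W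

/-- The canonical injection `ι_W : W → V ⊕_{ν,ω} W`. -/
def Corr.inr {V W : FDVec p} (c : Corr p V W) : W →ₗ[ZMod p] c.po :=
  c.carrier.mkQ ∘ₗ LinearMap.inr (ZMod p) ↥V ↥W

theorem Corr.inl_injective {V W : FDVec p} (c : Corr p V W) :
    Function.Injective c.inl := by
  intro a b hab
  have h : (Submodule.Quotient.mk ((a, 0) : ↥V × ↥W) : (↥V × ↥W) ⧸ c.carrier)
      = Submodule.Quotient.mk (b, 0) := hab
  have hmem : ((a, 0) : ↥V × ↥W) - (b, 0) ∈ c.carrier := by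
    rwa [Submodule.Quotient.eq] at h
  have h2 := c.inj_right _ hmem (by simp)
  have h3 := congrArg Prod.fst h2
  simpa [sub_eq_zero] using h3

theorem Corr.inr_injective {V W : FDVec p} (c : Corr p V W) :
    Function.Injective c.inr := by
  intro a b hab
  have h : (Submodule.Quotient.mk ((0, a) : ↥V × ↥W) : (↥V × ↥W) ⧸ c.carrier)
      = Submodule.Quotient.mk (0, b) := hab
  have hmem : ((0, a) : ↥V × ↥W) - (0, b) ∈ c.carrier := by
    rwa [Submodule.Quotient.eq] at h
  have h2 := c.inj_left _ hmem (by simp)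
  have h3 := congrArg Prod.snd h2
  simpa [sub_eq_zero] using h3

/-- The fibre `σ_{(V,x)}F(W)` of `σ_V F(W) = ⊔_{𝐁(V,W)} F(V ⊕_{ν,ω} W)` over `x ∈ F(V)`. -/
def CentralFib (F : VIPresheaf p) (V : FDVec p) (x : F.obj V) (W : FDVec p) : Type :=
  Σ c : Corr p V W,
    {b : F.obj c.po // F.map (V := V) (W := c.po) c.inl c.inl_injective b = x}

/-- The map `ρ_{F,(V,x)} : σ_{(V,x)}F(W) → F(W)`, sending `b` to `ι_W^* b`. -/
def centralMap (F : VIPresheaf p) (V : FDVec p) (x : F.obj V) (W : FDVec p) :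
    CentralFib F V x W → F.obj W :=
  fun s => F.map (V := W) (W := Sigma.fst s |>.po) s.1.inr s.1.inr_injective s.2.1

/-- `(V, x)` is central for `F` if `ρ_{F,(V,x)}` is an isomorphism of presheaves. -/
def VIPresheaf.IsCentral (F : VIPresheaf p) (V : FDVec p) (x : F.obj V) : Prop :=
  ∀ W : FDVec p, Function.Bijective (centralMap F V x W)

/-- The class of `𝐁(V, U)` associated with a pair of injections `δ : V → W`, `ε : U → W`:
its glue subspace is `ker(δ + ε) ⊆ V × U`. -/
def kerCorr {V U W : FDVec p} (δ : V →ₗ[ZMod p] W) (ε : U →ₗ[ZMod p] W)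
    (hδ : Function.Injective δ) (hε : Function.Injective ε) : Corr p V U where
  carrier := LinearMap.ker (δ.coprod ε)
  inj_left := by
    intro m hm h1
    have hk : δ m.1 + ε m.2 = 0 := by simpa [LinearMap.mem_ker] using hm
    rw [h1] at hk
    simp only [map_zero, zero_add] at hk
    have h2 : m.2 = 0 := hε (by simpa using hk)
    exact Prod.ext h1 h2
  inj_right := by
    intro m hm h2
    have hk : δ m.1 + ε m.2 = 0 := by simpa [LinearMap.mem_ker] using hm
    rw [h2] at hk
    simp only [map_zero, add_zero] at hk
    have h1 : m.1 = 0 := hδ (by simpa using hk)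
    exact Prod.ext h1 h2

/-- The isomorphism `ε ↑ δ : V ⊕_{ν,μ} U ≃ δ(V) + ε(U)` of the first isomorphism theorem. -/
noncomputable def upArrow {V U W : FDVec p} (δ : V →ₗ[ZMod p] W) (ε : U →ₗ[ZMod p] W) :
    ((↥V × ↥U) ⧸ LinearMap.ker (δ.coprod ε)) ≃ₗ[ZMod p]
      ↥(LinearMap.range δ ⊔ LinearMap.range ε : Submodule (ZMod p) W) :=
  (δ.coprod ε).quotKerEquivRange ≪≫ₗ LinearEquiv.ofEq _ _ (LinearMap.range_coprod δ ε)

/-- The class `[T, id_T, α] ∈ 𝐁(V, T)` associated with an injection `α : T → V`. -/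
def idCorr {V T : FDVec p} (α : T →ₗ[ZMod p] V) (hα : Function.Injective α) :
    Corr p V T where
  carrier := LinearMap.range (α.prod (-(LinearMap.id : T →ₗ[ZMod p] T)))
  inj_left := by
    rintro m ⟨t, rfl⟩ h1
    simp only [LinearMap.prod_apply, Pi.prod, LinearMap.neg_apply, LinearMap.id_apply] at h1 ⊢
    have ht : t = 0 := hα (by simpa using h1)
    simp [ht]
  inj_right := by
    rintro m ⟨t, rfl⟩ h2
    simp only [LinearMap.prod_apply, Pi.prod, LinearMap.neg_apply, LinearMap.id_apply] at h2 ⊢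
    have ht : t = 0 := by simpa [neg_eq_zero] using h2
    simp [ht]

theorem VIPresheaf.map_eq_map_map (F : VIPresheaf p) {V W X : FDVec p}
    {f : V →ₗ[ZMod p] W} (hf : Function.Injective f)
    {g : W →ₗ[ZMod p] X} (hg : Function.Injective g)
    {k : V →ₗ[ZMod p] X} (hk : Function.Injective k) (h : g ∘ₗ f = k) (x : F.obj X) :
    F.map k hk x = F.map f hf (F.map g hg x) := by
  subst h
  exact F.map_comp f hf g hg hk x

theorem Corr.ext_carrier {V W : FDVec p} {c d : Corr p V W} (h : c.carrier = d.carrier) :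
    c = d := by
  cases c
  cases d
  cases h
  rfl

/-- The map out of the pushout of the class of a cospan `V → X ← U` into `X`. -/
def kerCorrDesc {V U X : FDVec p} (δ : V →ₗ[ZMod p] X) (ε : U →ₗ[ZMod p] X)
    (hδ : Function.Injective δ) (hε : Function.Injective ε) :
    (kerCorr δ ε hδ hε).po →ₗ[ZMod p] X :=
  (kerCorr δ ε hδ hε).carrier.liftQ (δ.coprod ε) le_rfl

theorem kerCorrDesc_injective {V U X : FDVec p} (δ : V →ₗ[ZMod p] X) (ε : U →ₗ[ZMod p] X)
    (hδ : Function.Injective δ) (hε : Function.Injective ε) :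
    Function.Injective (kerCorrDesc δ ε hδ hε) :=
  LinearMap.ker_eq_bot.1 (Submodule.ker_liftQ_eq_bot _ _ _ le_rfl)

theorem kerCorrDesc_comp_inl {V U X : FDVec p} (δ : V →ₗ[ZMod p] X) (ε : U →ₗ[ZMod p] X)
    (hδ : Function.Injective δ) (hε : Function.Injective ε) :
    kerCorrDesc δ ε hδ hε ∘ₗ (kerCorr δ ε hδ hε).inl = δ := by
  ext v
  change δ v + ε 0 = δ v
  simp

theorem kerCorrDesc_comp_inr {V U X : FDVec p} (δ : V →ₗ[ZMod p] X) (ε : U →ₗ[ZMod p] X)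
    (hδ : Function.Injective δ) (hε : Function.Injective ε) :
    kerCorrDesc δ ε hδ hε ∘ₗ (kerCorr δ ε hδ hε).inr = ε := by
  ext v
  change δ 0 + ε v = ε v
  simp

/-- The element of `σ_{(V,x)}F(U)` obtained by restricting `e ∈ F(X)` along a cospan
`V → X ← U`. -/
def centralFibOfCospan (F : VIPresheaf p) {V U X : FDVec p} (x : F.obj V)
    (δ : V →ₗ[ZMod p] X) (ε : U →ₗ[ZMod p] X)
    (hδ : Function.Injective δ) (hε : Function.Injective ε) (e : F.obj X)
    (he : F.map δ hδ e = x) : CentralFib F V x U :=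
  ⟨kerCorr δ ε hδ hε, F.map (kerCorrDesc δ ε hδ hε) (kerCorrDesc_injective δ ε hδ hε) e, by
    rw [← he]
    exact (F.map_eq_map_map _ _ _ (kerCorrDesc_comp_inl δ ε hδ hε) e).symm⟩

theorem centralMap_centralFibOfCospan (F : VIPresheaf p) {V U X : FDVec p} (x : F.obj V)
    (δ : V →ₗ[ZMod p] X) (ε : U →ₗ[ZMod p] X)
    (hδ : Function.Injective δ) (hε : Function.Injective ε) (e : F.obj X)
    (he : F.map δ hδ e = x) :
    centralMap F V x U (centralFibOfCospan F x δ ε hδ hε e he) = F.map ε hε e :=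
  (F.map_eq_map_map _ _ _ (kerCorrDesc_comp_inr δ ε hδ hε) e).symm

/-- If `(V, x)` is central, two elements restricting to `x` on `V` and to a common element
on `U` agree on the span of `V` and `U`. -/
theorem VIPresheaf.IsCentral.exists_common_restriction {F : VIPresheaf p} {V : FDVec p}
    {x : F.obj V} (hx : F.IsCentral V x) {U X X' : FDVec p}
    {δ : V →ₗ[ZMod p] X} {ε : U →ₗ[ZMod p] X}
    (hδ : Function.Injective δ) (hε : Function.Injective ε) {e : F.obj X}
    {δ' : V →ₗ[ZMod p] X'} {ε' : U →ₗ[ZMod p] X'}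
    (hδ' : Function.Injective δ') (hε' : Function.Injective ε') {e' : F.obj X'}
    (he : F.map δ hδ e = x) (he' : F.map δ' hδ' e' = x)
    (hU : F.map ε hε e = F.map ε' hε' e') :
    ∃ (R : FDVec p) (j : V →ₗ[ZMod p] R) (k : U →ₗ[ZMod p] R)
      (m : R →ₗ[ZMod p] X) (m' : R →ₗ[ZMod p] X')
      (hm : Function.Injective m) (hm' : Function.Injective m'),
      m ∘ₗ j = δ ∧ m ∘ₗ k = ε ∧ m' ∘ₗ j = δ' ∧ m' ∘ₗ k = ε' ∧
        F.map m hm e = F.map m' hm' e' := by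
  have key : centralFibOfCospan F x δ ε hδ hε e he =
      centralFibOfCospan F x δ' ε' hδ' hε' e' he' := by
    apply (hx U).1
    rw [centralMap_centralFibOfCospan, centralMap_centralFibOfCospan, hU]
  have transport : ∀ s : CentralFib F V x U, centralFibOfCospan F x δ' ε' hδ' hε' e' he' = s →
      ∃ (m' : s.1.po →ₗ[ZMod p] X') (hm' : Function.Injective m'),
        m' ∘ₗ s.1.inl = δ' ∧ m' ∘ₗ s.1.inr = ε' ∧ s.2.1 = F.map m' hm' e' := by
    rintro s rfl
    exact ⟨kerCorrDesc δ' ε' hδ' hε', kerCorrDesc_injective _ _ _ _,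
      kerCorrDesc_comp_inl _ _ _ _, kerCorrDesc_comp_inr _ _ _ _, rfl⟩
  obtain ⟨m', hm', h1, h2, h3⟩ := transport _ key.symm
  exact ⟨_, _, _, kerCorrDesc δ ε hδ hε, m', kerCorrDesc_injective _ _ _ _, hm',
    kerCorrDesc_comp_inl _ _ _ _, kerCorrDesc_comp_inr _ _ _ _, h1, h2, h3⟩

/-- If `(V, x)` is central and `e` restricts to `x` on `V` and to `α^* x` on `T`, then `T` sits
inside `V` via `α`. -/
theorem VIPresheaf.IsCentral.comp_eq {F : VIPresheaf p} {V : FDVec p}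
    {x : F.obj V} (hx : F.IsCentral V x) {T X : FDVec p}
    {α : T →ₗ[ZMod p] V} (hα : Function.Injective α)
    {δ : V →ₗ[ZMod p] X} {ε : T →ₗ[ZMod p] X}
    (hδ : Function.Injective δ) (hε : Function.Injective ε) {e : F.obj X}
    (he : F.map δ hδ e = x) (hT : F.map ε hε e = F.map α hα x) :
    δ ∘ₗ α = ε := by
  obtain ⟨R, j, k, m, m', -, hm', rfl, rfl, h3, h4, -⟩ := hx.exists_common_restriction hδ hε
    (linearMap_id_injective V) hα he (F.map_id V _ x) hT
  have : j ∘ₗ α = k := by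
    ext t
    apply hm'
    have h5 := LinearMap.congr_fun h3 (α t)
    have h6 := LinearMap.congr_fun h4 t
    simp only [LinearMap.comp_apply, LinearMap.id_apply] at h5 h6 ⊢
    rw [h5, h6]
  rw [← this, LinearMap.comp_assoc]

theorem Corr.comp_coprod {V W X R : FDVec p} (c : Corr p V W) {g : c.po →ₗ[ZMod p] X}
    {a : V →ₗ[ZMod p] R} {k : W →ₗ[ZMod p] R} {m : R →ₗ[ZMod p] X}
    (hl : m ∘ₗ a = g ∘ₗ c.inl) (hr : m ∘ₗ k = g ∘ₗ c.inr) :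
    m ∘ₗ a.coprod k = g ∘ₗ c.carrier.mkQ := by
  apply LinearMap.prod_ext
  · rw [LinearMap.comp_assoc, LinearMap.coprod_inl, hl]
    rfl
  · rw [LinearMap.comp_assoc, LinearMap.coprod_inr, hr]
    rfl

theorem Corr.carrier_eq_ker_coprod {V W X R : FDVec p} (c : Corr p V W)
    {g : c.po →ₗ[ZMod p] X} (hg : Function.Injective g)
    {a : V →ₗ[ZMod p] R} {k : W →ₗ[ZMod p] R} {m : R →ₗ[ZMod p] X}
    (hm : Function.Injective m)
    (hl : m ∘ₗ a = g ∘ₗ c.inl) (hr : m ∘ₗ k = g ∘ₗ c.inr) :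
    c.carrier = LinearMap.ker (a.coprod k) := by
  rw [← LinearMap.ker_comp_of_ker_eq_bot (a.coprod k) (LinearMap.ker_eq_bot.2 hm),
    c.comp_coprod hl hr,
    LinearMap.ker_comp_of_ker_eq_bot _ (LinearMap.ker_eq_bot.2 hg), Submodule.ker_mkQ]

/-- **Statement 9.** If `(V,x)` is central for `F` and `α : T → V` is an injective
linear map, then `(T, α^* x)` is central for `F`. -/
theorem statement_9 {p : ℕ} [Fact p.Prime] (F : VIPresheaf p) (V : FDVec p) (x : F.obj V)
    (hx : F.IsCentral V x) (T : FDVec p) (α : T →ₗ[ZMod p] V) (hα : Function.Injective α) :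
    F.IsCentral T (F.map α hα x) := by
  intro W
  constructor
  · rintro ⟨c₁, b₁, hb₁⟩ ⟨c₂, b₂, hb₂⟩ hb
    change F.map c₁.inr c₁.inr_injective b₁ = F.map c₂.inr c₂.inr_injective b₂ at hb
    obtain ⟨⟨d₁, e₁, he₁⟩, hd₁⟩ := (hx c₁.po).2 b₁
    obtain ⟨⟨d₂, e₂, he₂⟩, hd₂⟩ := (hx c₂.po).2 b₂
    change F.map d₁.inr d₁.inr_injective e₁ = b₁ at hd₁
    change F.map d₂.inr d₂.inr_injective e₂ = b₂ at hd₂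
    subst hd₁ hd₂
    rw [← F.map_comp _ _ _ _ (comp_injective _ _ c₁.inl_injective d₁.inr_injective)] at hb₁
    rw [← F.map_comp _ _ _ _ (comp_injective _ _ c₂.inl_injective d₂.inr_injective)] at hb₂
    rw [← F.map_comp _ _ _ _ (comp_injective _ _ c₁.inr_injective d₁.inr_injective),
      ← F.map_comp _ _ _ _ (comp_injective _ _ c₂.inr_injective d₂.inr_injective)] at hb
    have hT₁ := hx.comp_eq hα _ _ he₁ hb₁
    have hT₂ := hx.comp_eq hα _ _ he₂ hb₂
    obtain ⟨R, j, k, m₁, m₂, hm₁, hm₂, hj₁, hk₁, hj₂, hk₂, hR⟩ :=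
      hx.exists_common_restriction _ _ _ _ he₁ he₂ hb
    rw [← hj₁, LinearMap.comp_assoc] at hT₁
    rw [← hj₂, LinearMap.comp_assoc] at hT₂
    have hc₁ := c₁.carrier_eq_ker_coprod d₁.inr_injective hm₁ hT₁ hk₁
    have hc₂ := c₂.carrier_eq_ker_coprod d₂.inr_injective hm₂ hT₂ hk₂
    obtain rfl : c₁ = c₂ := Corr.ext_carrier (hc₁.trans hc₂.symm)
    let u : c₁.po →ₗ[ZMod p] R := c₁.carrier.liftQ ((j ∘ₗ α).coprod k) hc₁.le
    have hu₁ : m₁ ∘ₗ u = d₁.inr := Submodule.linearMap_qext _ (c₁.comp_coprod hT₁ hk₁)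
    have hu₂ : m₂ ∘ₗ u = d₂.inr := Submodule.linearMap_qext _ (c₁.comp_coprod hT₂ hk₂)
    have hu : Function.Injective u := by
      have h := d₁.inr_injective
      rw [← hu₁, LinearMap.coe_comp] at h
      exact h.of_comp
    have hE : F.map d₁.inr d₁.inr_injective e₁ = F.map d₂.inr d₂.inr_injective e₂ := by
      rw [F.map_eq_map_map hu hm₁ _ hu₁, F.map_eq_map_map hu hm₂ _ hu₂, hR]
    exact Sigma.ext rfl (heq_of_eq (Subtype.ext hE))
  · intro y
    obtain ⟨⟨c, b, hb⟩, rfl⟩ := (hx W).2 y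
    have hT : F.map (c.inl ∘ₗ α) (comp_injective _ _ hα c.inl_injective) b = F.map α hα x := by
      rw [F.map_comp _ hα _ c.inl_injective, hb]
    exact ⟨centralFibOfCospan F _ (c.inl ∘ₗ α) c.inr _ c.inr_injective b hT,
      centralMap_centralFibOfCospan F _ _ _ _ _ b hT⟩

end Paper
end

section
/- Let (F, q_F) be an object of _W Set^{(𝒱I)ᵒᵖ} (a presheaf on 𝒱I with a natural surjection from Hom_{𝒱I}(−,W)), write φ := q_F(id_W), and let δ : V → W and ε : U → W be injective linear maps. Then the element (ε↑δ)^* ι_{δ(V)+ε(U)}^* φ ∈ F(V⊕_{ν,μ}U) satisfies ι_V^*((ε↑δ)^* ι_{δ(V)+ε(U)}^* φ) = δ^*φ and ι_U^*((ε↑δ)^* ι_{δ(V)+ε(U)}^* φ) = ε^*φ; hence it lies in σ_{(V,δ^*φ)}F(U) and is sent by ρ_{F,(V,δ^*φ)} to ε^*φ. In particular, ρ_{F,(V,δ^*φ)} is surjective. -/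
set_option maxHeartbeats 1000000

namespace Paper

variable {p : ℕ} [Fact p.Prime]

theorem subtype_comp_upArrow_comp_inl {V U W : FDVec p} (δ : V →ₗ[ZMod p] W)
    (ε : U →ₗ[ZMod p] W) (hδ : Function.Injective δ) (hε : Function.Injective ε) :
    ((LinearMap.range δ ⊔ LinearMap.range ε).subtype ∘ₗ (upArrow δ ε).toLinearMap) ∘ₗ
      (kerCorr δ ε hδ hε).inl = δ := by
  ext v
  change (δ.coprod ε) (v, 0) = δ v
  simp

theorem subtype_comp_upArrow_comp_inr {V U W : FDVec p} (δ : V →ₗ[ZMod p] W)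
    (ε : U →ₗ[ZMod p] W) (hδ : Function.Injective δ) (hε : Function.Injective ε) :
    ((LinearMap.range δ ⊔ LinearMap.range ε).subtype ∘ₗ (upArrow δ ε).toLinearMap) ∘ₗ
      (kerCorr δ ε hδ hε).inr = ε := by
  ext u
  change (δ.coprod ε) (0, u) = ε u
  simp

theorem VIPresheaf.map_map (F : VIPresheaf p) {V W X : FDVec p} (f : V →ₗ[ZMod p] W)
    (hf : Function.Injective f) (g : W →ₗ[ZMod p] X) (hg : Function.Injective g)
    (x : F.obj X) :
    F.map f hf (F.map g hg x) = F.map (g ∘ₗ f) (comp_injective f g hf hg) x :=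
  (F.map_comp f hf g hg _ x).symm

theorem VIPresheaf.map_congr (F : VIPresheaf p) {V W : FDVec p} {f g : V →ₗ[ZMod p] W}
    (h : f = g) (hf : Function.Injective f) (hg : Function.Injective g) (x : F.obj W) :
    F.map f hf x = F.map g hg x := by
  subst h
  rfl

/-- The element `(ε↑δ)^* ι_{δ(V)+ε(U)}^* x` of `F(V ⊕_{ν,μ} U)`. -/
noncomputable def VIPresheaf.glue (F : VIPresheaf p) {V U W : FDVec p} (δ : V →ₗ[ZMod p] W)
    (ε : U →ₗ[ZMod p] W) (hδ : Function.Injective δ) (hε : Function.Injective ε)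
    (x : F.obj W) : F.obj (kerCorr δ ε hδ hε).po :=
  F.map (upArrow δ ε).toLinearMap (equiv_toLinearMap_injective _)
    (F.map (V := subFD (LinearMap.range δ ⊔ LinearMap.range ε)) (W := W)
      (LinearMap.range δ ⊔ LinearMap.range ε).subtype
      (Submodule.injective_subtype _) x)

theorem VIPresheaf.map_inl_glue (F : VIPresheaf p) {V U W : FDVec p} (δ : V →ₗ[ZMod p] W)
    (ε : U →ₗ[ZMod p] W) (hδ : Function.Injective δ) (hε : Function.Injective ε)
    (x : F.obj W) :
    F.map (kerCorr δ ε hδ hε).inl (kerCorr δ ε hδ hε).inl_injective (F.glue δ ε hδ hε x)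
      = F.map δ hδ x :=
  (congrArg _ (F.map_map _ _ _ _ x)).trans <| (F.map_map _ _ _ _ x).trans <|
    F.map_congr (subtype_comp_upArrow_comp_inl δ ε hδ hε) _ _ x

theorem VIPresheaf.map_inr_glue (F : VIPresheaf p) {V U W : FDVec p} (δ : V →ₗ[ZMod p] W)
    (ε : U →ₗ[ZMod p] W) (hδ : Function.Injective δ) (hε : Function.Injective ε)
    (x : F.obj W) :
    F.map (kerCorr δ ε hδ hε).inr (kerCorr δ ε hδ hε).inr_injective (F.glue δ ε hδ hε x)
      = F.map ε hε x :=
  (congrArg _ (F.map_map _ _ _ _ x)).trans <| (F.map_map _ _ _ _ x).trans <|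
    F.map_congr (subtype_comp_upArrow_comp_inr δ ε hδ hε) _ _ x

theorem GenFamily.q_eq_map_phi {ι : Type} {W : ι → FDVec p} {F : VIPresheaf p}
    (Q : GenFamily W F) (V : FDVec p) (i : ι) (f : V →ₗ[ZMod p] W i)
    (hf : Function.Injective f) : Q.q V i f hf = F.map f hf (Q.phi i) :=
  Q.natural V (W i) f hf i LinearMap.id (linearMap_id_injective _) hf

/-- **Statement 12.** Let `(F, q_F)` be an object of `_W Set^{(𝒱I)ᵒᵖ}` with `φ = q_F(id_W)`,
and let `δ : V → W`, `ε : U → W` be injective.  Then `b := (ε↑δ)^* ι_{δ(V)+ε(U)}^* φ`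
satisfies `ι_V^* b = δ^* φ` and `ι_U^* b = ε^* φ`; hence it lies in `σ_{(V,δ^*φ)}F(U)`
and is sent by `ρ_{F,(V,δ^*φ)}` to `ε^* φ`.  In particular `ρ_{F,(V,δ^*φ)}` is surjective. -/
theorem statement_12 {p : ℕ} [Fact p.Prime] (W : FDVec p) (F : VIPresheaf p)
    (Q : GenFamily (fun _ : PUnit => W) F)
    (V U : FDVec p) (δ : V →ₗ[ZMod p] W) (hδ : Function.Injective δ)
    (ε : U →ₗ[ZMod p] W) (hε : Function.Injective ε)
    (b : F.obj (kerCorr δ ε hδ hε).po)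
    (hb : b = F.map (upArrow δ ε).toLinearMap (equiv_toLinearMap_injective _)
        (F.map (V := subFD (LinearMap.range δ ⊔ LinearMap.range ε)) (W := W)
          (LinearMap.range δ ⊔ LinearMap.range ε).subtype
          (Submodule.injective_subtype _) (Q.phi PUnit.unit))) :
    ∃ hfib : F.map (kerCorr δ ε hδ hε).inl (kerCorr δ ε hδ hε).inl_injective b
        = F.map δ hδ (Q.phi PUnit.unit),
      F.map (kerCorr δ ε hδ hε).inr (kerCorr δ ε hδ hε).inr_injective b
          = F.map ε hε (Q.phi PUnit.unit) ∧
      centralMap F V (F.map δ hδ (Q.phi PUnit.unit)) U ⟨kerCorr δ ε hδ hε, ⟨b, hfib⟩⟩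
          = F.map ε hε (Q.phi PUnit.unit) ∧
      Function.Surjective (centralMap F V (F.map δ hδ (Q.phi PUnit.unit)) U) := by
  replace hb : b = F.glue δ ε hδ hε (Q.phi PUnit.unit) := hb
  subst hb
  refine ⟨F.map_inl_glue δ ε hδ hε _, F.map_inr_glue δ ε hδ hε _,
    F.map_inr_glue δ ε hδ hε _, fun y => ?_⟩
  obtain ⟨i, f, hf, rfl⟩ := Q.surjective U y
  exact ⟨⟨kerCorr δ f hδ hf, F.glue δ f hδ hf (Q.phi PUnit.unit),
      F.map_inl_glue δ f hδ hf _⟩,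
    (F.map_inr_glue δ f hδ hf _).trans (Q.q_eq_map_phi U i f hf).symm⟩

end Paper
end
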